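/- With the Newton-iteration setup (A_i, V_i, B_i as in the slope factorization recursion for P with extremal point at abscissa d), setting κ = NF(P)(d+1) + NF(P)(d−1) − 2·NF(P)(d) > 0, the rate of convergence is quadratic: for all i ≥ 0, NF(A_∞ − A_i)(x) ≥ NF(P)(x) + 2^i κ for all x in [0, d−1]. -/

import Mathlib

open Polynomial Set

noncomputable section

variable {K : Type*} [Field K]

/-- Map `WithTop ℤ` into `EReal`. -/
def toE : WithTop ℤ → EReal := WithTop.recTopCoe ⊤ (fun n => ((n : ℝ) : EReal))

/-- Newton function of a polynomial: the largest convex function lying below the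
points `(i, val aᵢ)`, realized as the sup of affine minorants. -/
def NF (v : AddValuation K (WithTop ℤ)) (P : K[X]) (x : ℝ) : EReal :=
  sSup {y : EReal | ∃ a b : ℝ,
    (∀ i : ℕ, i ≤ P.natDegree → ((a * (i : ℝ) + b : ℝ) : EReal) ≤ toE (v (P.coeff i))) ∧
    y = ((a * x + b : ℝ) : EReal)}

/-- The invariant `b_φ(Q) = min_{0 ≤ x ≤ deg Q} (NF(Q)(x) − φ(x))`. -/
def bE (v : AddValuation K (WithTop ℤ)) (φ : ℝ → EReal) (Q : K[X]) : EReal :=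
  sInf {y : EReal | ∃ x : ℝ, 0 ≤ x ∧ x ≤ (Q.natDegree : ℝ) ∧ y = NF v Q x - φ x}

/-!
Fix an affine minorant of the Newton polygon of `P` of slope at most `lam0`, the slope on the left
of `d`, and let `φ` be its maximum with the line of slope `lam0` through the vertex `(d, c)`. Write
`coeffsAbove w φ t` for the polynomials whose coefficients lie above `φ + t`. Since the leading
coefficient of `A i` sits exactly on `φ` and `φ` has slope `lam0` beyond `d`, Euclidean division by
`A i` loses no precision: it sends `coeffsAbove w φ t` to itself on remainders and to the Gauss ball
`linearAbove w lam0 t` on quotients. So the remainder `P % A i` and the defect of `V i` as an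
inverse of `P / A i` modulo `A i` can be measured by one number `s`, initially `κ = lam1 - lam0`.
One Newton step writes `P = A (i + 1) * (P / A i + g) + T` with `g` of precision `s` and `T` a sum
of products of two quantities of precision `s`, hence `s` doubles. Summing the corrections bounds
the coefficients of the limit minus `A i`. On `x ≤ d` a minorant steeper than `lam0` is dominated by
the line of slope `lam0` through the vertex, so the supremum over these minorants is `NF(P)`.
-/

section Weights

/-- The polynomials whose coefficients, measured by the real-valued valuation `w`, all lie above
the weight `φ` shifted up by `t`: the condition `t ≤ b_φ(S)`, read on coefficients. -/
def coeffsAbove (w : AddValuation K (WithTop ℝ)) (φ : ℕ → ℝ) (t : ℝ) : AddSubgroup K[X] where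
  carrier := {S | ∀ j, ((φ j + t : ℝ) : WithTop ℝ) ≤ w (S.coeff j)}
  zero_mem' j := by rw [coeff_zero, w.map_zero]; exact le_top
  add_mem' hS hT j := by rw [coeff_add]; exact w.map_le_add (hS j) (hT j)
  neg_mem' hS j := by rw [coeff_neg, w.map_neg]; exact hS j

/-- The polynomials lying above the line of slope `lam` through `(0, t)`; equivalently, those whose
Gauss valuation of slope `lam` is at least `t`. -/
abbrev linearAbove (w : AddValuation K (WithTop ℝ)) (lam t : ℝ) : AddSubgroup K[X] :=
  coeffsAbove w (fun j => lam * j) t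

variable {w : AddValuation K (WithTop ℝ)} {φ ψ : ℕ → ℝ} {lam s t : ℝ} {S T : K[X]}

lemma coeffsAbove_le_of_le (h : ∀ j, φ j + s ≤ ψ j + t) : coeffsAbove w ψ t ≤ coeffsAbove w φ s :=
  fun _ hS j => (WithTop.coe_le_coe.2 (h j)).trans (hS j)

lemma coeffsAbove_antitone : Antitone (coeffsAbove w φ) :=
  fun _ _ hst => coeffsAbove_le_of_le fun _ => by gcongr

lemma one_mem_linearAbove : (1 : K[X]) ∈ linearAbove w lam 0 := by
  intro j
  rw [coeff_one]
  split_ifs with h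
  · simp [h]
  · simp

lemma mul_mem_coeffsAbove (hφ : ∀ j k : ℕ, φ (j + k) ≤ φ j + lam * k)
    (hS : S ∈ linearAbove w lam s) (hT : T ∈ coeffsAbove w φ t) :
    S * T ∈ coeffsAbove w φ (s + t) := by
  intro j
  rw [coeff_mul]
  refine w.map_le_sum fun ⟨k, l⟩ hkl => ?_
  obtain rfl : k + l = j := Finset.HasAntidiagonal.mem_antidiagonal.1 hkl
  have hle : φ (k + l) + (s + t) ≤ (lam * k + s) + (φ l + t) := by
    rw [add_comm k l]; linarith [hφ l k]
  rw [w.map_mul]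
  calc ((φ (k + l) + (s + t) : ℝ) : WithTop ℝ)
      ≤ ((lam * k + s : ℝ) : WithTop ℝ) + ((φ l + t : ℝ) : WithTop ℝ) := by exact_mod_cast hle
    _ ≤ w (S.coeff k) + w (T.coeff l) := add_le_add (hS k) (hT l)

lemma mul_mem_linearAbove (hS : S ∈ linearAbove w lam s) (hT : T ∈ linearAbove w lam t) :
    S * T ∈ linearAbove w lam (s + t) :=
  mul_mem_coeffsAbove (fun j k => by push_cast; linarith) hS hT

/-- A weight whose increments have slope at most `lam`, with slope exactly `lam` from the abscissa
`d` on: a convex polygon on `[0, d]` continued by a ray of slope `lam`. -/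
structure IsAffineFrom (φ : ℕ → ℝ) (lam : ℝ) (d : ℕ) : Prop where
  le_add : ∀ j k : ℕ, φ (j + k) ≤ φ j + lam * k
  add_eq : ∀ k : ℕ, φ (d + k) = φ d + lam * k

lemma isAffineFrom_linear (b lam : ℝ) (d : ℕ) : IsAffineFrom (fun j => lam * j + b) lam d where
  le_add j k := by push_cast; linarith
  add_eq k := by push_cast; ring

lemma IsAffineFrom.coeffsAbove_le_linearAbove {d : ℕ} (hφ : IsAffineFrom φ lam d) :
    coeffsAbove w φ t ≤ linearAbove w lam (t + φ d - lam * d) := by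
  refine coeffsAbove_le_of_le fun j => ?_
  have h := hφ.le_add j d
  rw [add_comm, hφ.add_eq] at h
  linarith

end Weights

section Division

lemma add_mul_mod (S A q : K[X]) : (S + A * q) % A = S % A :=
  mod_eq_of_dvd_sub ⟨q, by ring⟩

lemma add_mul_div {A : K[X]} (hA : A ≠ 0) (S q : K[X]) : (S + A * q) / A = S / A + q := by
  have hdiv := EuclideanDomain.div_add_mod (S + A * q) A
  rw [add_mul_mod] at hdiv
  apply mul_left_cancel₀ hA
  linear_combination hdiv - EuclideanDomain.div_add_mod S A

lemma mul_mod_mod (S T A : K[X]) : (S * (T % A)) % A = (S * T) % A :=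
  mod_eq_of_dvd_sub ⟨-(S * (T / A)), by
    linear_combination S * EuclideanDomain.div_add_mod T A⟩

/-- A polynomial of degree `d` lying above the weight `φ` and whose leading coefficient sits exactly
on it. -/
structure IsDistinguished (w : AddValuation K (WithTop ℝ)) (φ : ℕ → ℝ) (d : ℕ) (A : K[X]) :
    Prop where
  natDegree_le : A.natDegree ≤ d
  val_coeff : w (A.coeff d) = φ d
  mem : A ∈ coeffsAbove w φ 0

namespace IsDistinguished

variable {w : AddValuation K (WithTop ℝ)} {φ : ℕ → ℝ} {lam s t : ℝ} {d : ℕ} {A D S T : K[X]}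

lemma coeff_ne_zero (hA : IsDistinguished w φ d A) : A.coeff d ≠ 0 := by
  rw [← w.ne_top_iff, hA.val_coeff]
  exact WithTop.coe_ne_top

lemma natDegree_eq (hA : IsDistinguished w φ d A) : A.natDegree = d :=
  hA.natDegree_le.antisymm (le_natDegree_of_ne_zero hA.coeff_ne_zero)

lemma ne_zero (hA : IsDistinguished w φ d A) : A ≠ 0 := by
  rintro rfl
  exact hA.coeff_ne_zero (coeff_zero d)

lemma add (hA : IsDistinguished w φ d A) (hdeg : D.degree < A.degree)
    (hD : D ∈ coeffsAbove w φ 0) : IsDistinguished w φ d (A + D) where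
  natDegree_le := by
    rw [natDegree_eq_natDegree (degree_add_eq_left_of_degree_lt hdeg)]
    exact hA.natDegree_le
  val_coeff := by
    rw [degree_eq_natDegree hA.ne_zero, hA.natDegree_eq] at hdeg
    rw [coeff_add, coeff_eq_zero_of_degree_lt hdeg, add_zero, hA.val_coeff]
  mem := add_mem hA.mem hD

lemma leadingQuotient_mem (hφ : IsAffineFrom φ lam d) (hA : IsDistinguished w φ d A)
    (hS : S ∈ coeffsAbove w φ t) (e : ℕ) :
    C (S.coeff (d + e) / A.coeff d) * X ^ e ∈ linearAbove w lam t := by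
  intro j
  rw [coeff_C_mul_X_pow]
  split_ifs with hj
  · subst hj
    have hval : w (S.coeff (d + j) / A.coeff d) + φ d = w (S.coeff (d + j)) := by
      rw [← hA.val_coeff, ← w.map_mul, div_mul_cancel₀ _ hA.coeff_ne_zero]
    rw [← WithTop.add_le_add_iff_right (WithTop.coe_ne_top (a := φ d)), hval]
    refine le_of_eq_of_le ?_ (hS (d + j))
    rw [hφ.add_eq, ← WithTop.coe_add]
    congr 1
    ring
  · simp

lemma degree_sub_leadingQuotient_lt (hA : IsDistinguished w φ d A) {e : ℕ}
    (hS : S.natDegree = d + e) (hS0 : S ≠ 0) :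
    (S - A * (C (S.coeff (d + e) / A.coeff d) * X ^ e)).degree < S.degree := by
  have hlead : S.coeff (d + e) ≠ 0 := by rwa [← hS, coeff_natDegree, leadingCoeff_ne_zero]
  have hq : S.coeff (d + e) / A.coeff d ≠ 0 := div_ne_zero hlead hA.coeff_ne_zero
  refine degree_sub_lt_left ?_ hS0 ?_
  · rw [degree_mul, degree_C_mul_X_pow _ hq, degree_eq_natDegree hA.ne_zero, hA.natDegree_eq,
      degree_eq_natDegree hS0, hS]
    rfl
  · rw [leadingCoeff_mul, leadingCoeff_C_mul_X_pow, leadingCoeff, leadingCoeff, hS,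
      hA.natDegree_eq, mul_div_cancel₀ _ hA.coeff_ne_zero]

theorem div_mem_and_mod_mem (hφ : IsAffineFrom φ lam d) (hA : IsDistinguished w φ d A)
    (hS : S ∈ coeffsAbove w φ t) :
    S / A ∈ linearAbove w lam t ∧ S % A ∈ coeffsAbove w φ t := by
  induction S using WellFounded.induction degree_lt_wf with | _ S ih => ?_
  rcases lt_or_ge S.degree A.degree with hlt | hge
  · rw [(Polynomial.div_eq_zero_iff hA.ne_zero).2 hlt, (mod_eq_self_iff hA.ne_zero).2 hlt]
    exact ⟨zero_mem _, hS⟩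
  · have hS0 : S ≠ 0 := fun h => hA.ne_zero (by simpa [h] using hge)
    obtain ⟨e, he⟩ := Nat.exists_eq_add_of_le (natDegree_le_natDegree hge)
    rw [hA.natDegree_eq] at he
    set q := C (S.coeff (d + e) / A.coeff d) * X ^ e
    have hq : q ∈ linearAbove w lam t := hA.leadingQuotient_mem hφ hS e
    have hqA : A * q ∈ coeffsAbove w φ t := by
      simpa [mul_comm] using mul_mem_coeffsAbove hφ.le_add hq hA.mem
    obtain ⟨hdiv, hmod⟩ := ih (S - A * q) (hA.degree_sub_leadingQuotient_lt he hS0)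
      (sub_mem hS hqA)
    rw [← sub_add_cancel S (A * q), add_mul_div hA.ne_zero, add_mul_mod]
    exact ⟨add_mem hdiv hq, hmod⟩

lemma div_mem (hφ : IsAffineFrom φ lam d) (hA : IsDistinguished w φ d A)
    (hS : S ∈ coeffsAbove w φ t) : S / A ∈ linearAbove w lam t :=
  (hA.div_mem_and_mod_mem hφ hS).1

lemma mod_mem (hφ : IsAffineFrom φ lam d) (hA : IsDistinguished w φ d A)
    (hS : S ∈ coeffsAbove w φ t) : S % A ∈ coeffsAbove w φ t :=
  (hA.div_mem_and_mod_mem hφ hS).2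

lemma extend_ray (hφ : IsAffineFrom φ lam d) (hA : IsDistinguished w φ d A) :
    IsDistinguished w (fun j => lam * j + (φ d - lam * d)) d A where
  natDegree_le := hA.natDegree_le
  val_coeff := by rw [hA.val_coeff]; congr 1; ring
  mem := coeffsAbove_le_of_le (fun j => by linarith) (hφ.coeffsAbove_le_linearAbove hA.mem)

lemma mod_mem_linearAbove (hφ : IsAffineFrom φ lam d) (hA : IsDistinguished w φ d A)
    (hS : S ∈ linearAbove w lam t) : S % A ∈ linearAbove w lam t := by
  have hmod := (hA.extend_ray hφ).mod_mem (isAffineFrom_linear _ lam d)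
    (t := t - (φ d - lam * d)) (coeffsAbove_le_of_le (fun j => by linarith) hS)
  exact coeffsAbove_le_of_le (fun j => by linarith) hmod

lemma div_mul_mem_linearAbove (hφ : IsAffineFrom φ lam d) (hA : IsDistinguished w φ d A)
    (hS : S ∈ linearAbove w lam s) (hT : T ∈ coeffsAbove w φ t) :
    S / A * T ∈ linearAbove w lam (s + t) := by
  have hdiv := (hA.extend_ray hφ).div_mem (isAffineFrom_linear _ lam d)
    (t := s - (φ d - lam * d)) (coeffsAbove_le_of_le (fun j => by linarith) hS)
  exact coeffsAbove_antitone (by linarith)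
    (mul_mem_linearAbove hdiv (hφ.coeffsAbove_le_linearAbove hT))

end IsDistinguished

end Division

section NewtonIteration

variable {w : AddValuation K (WithTop ℝ)} {φ : ℕ → ℝ} {lam s : ℝ} {d : ℕ} {P A V B : K[X]}

/-- `A` is a divisor of `P`, and `V` an inverse of the cofactor `P / A` modulo `A`, up to errors of
precision `s` with respect to the weight `φ`. -/
structure NewtonApprox (w : AddValuation K (WithTop ℝ)) (φ : ℕ → ℝ) (lam : ℝ) (d : ℕ)
    (P A V : K[X]) (s : ℝ) : Prop where
  distinguished : IsDistinguished w φ d A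
  inv_mem : V ∈ linearAbove w lam 0
  div_mem : P / A ∈ linearAbove w lam 0
  mod_mem : P % A ∈ coeffsAbove w φ s
  inv_defect_mem : (1 - V * (P / A)) % A ∈ linearAbove w lam s

lemma one_sub_mul_mem (hV : V ∈ linearAbove w lam 0) (hB : B ∈ linearAbove w lam 0) :
    1 - V * B ∈ linearAbove w lam 0 :=
  sub_mem one_mem_linearAbove (by simpa using mul_mem_linearAbove hV hB)

lemma newtonApprox_one (hφ : IsAffineFrom φ lam d) (hs : 0 ≤ s) (hA : IsDistinguished w φ d A)
    (hPA : P - A ∈ coeffsAbove w φ s) : NewtonApprox w φ lam d P A 1 s := by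
  have hP : P = (P - A) + A * 1 := by ring
  have hmod : P % A = (P - A) % A := by
    conv_lhs => rw [hP]
    rw [add_mul_mod]
  have hdiv : P / A = (P - A) / A + 1 := by
    conv_lhs => rw [hP]
    rw [add_mul_div hA.ne_zero]
  have hq : (P - A) / A ∈ linearAbove w lam s := hA.div_mem hφ hPA
  have hdefect : 1 - 1 * (P / A) = -((P - A) / A) := by rw [hdiv]; ring
  exact
    { distinguished := hA
      inv_mem := one_mem_linearAbove
      div_mem := hdiv ▸ add_mem (coeffsAbove_antitone hs hq) one_mem_linearAbove
      mod_mem := hmod ▸ hA.mod_mem hφ hPA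
      inv_defect_mem := hdefect ▸ hA.mod_mem_linearAbove hφ (neg_mem hq) }

lemma one_sub_newton_inv_mod (V B A : K[X]) :
    (1 - (2 * V - V ^ 2 * B) % A * B) % A
      = ((1 - V * B) % A * ((1 - V * B) % A)) % A := by
  rw [← mul_mod]
  refine mod_eq_of_dvd_sub ⟨(2 * V - V ^ 2 * B) / A * B, ?_⟩
  linear_combination (-B) * EuclideanDomain.div_add_mod (2 * V - V ^ 2 * B) A

lemma IsDistinguished.newton_inv_mem (hφ : IsAffineFrom φ lam d) (hA : IsDistinguished w φ d A)
    (hV : V ∈ linearAbove w lam 0) (hB : B ∈ linearAbove w lam 0) :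
    (2 * V - V ^ 2 * B) % A ∈ linearAbove w lam 0 := by
  have hVVB : V + V * (1 - V * B) ∈ linearAbove w lam 0 :=
    add_mem hV (by simpa using mul_mem_linearAbove hV (one_sub_mul_mem hV hB))
  have hform : 2 * V - V ^ 2 * B = V + V * (1 - V * B) := by ring
  exact hA.mod_mem_linearAbove hφ (hform ▸ hVVB)

lemma IsDistinguished.newton_inv_defect_mem (hφ : IsAffineFrom φ lam d)
    (hA : IsDistinguished w φ d A) (hE : (1 - V * B) % A ∈ linearAbove w lam s) :
    (1 - (2 * V - V ^ 2 * B) % A * B) % A ∈ linearAbove w lam (2 * s) := by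
  rw [one_sub_newton_inv_mod, two_mul]
  exact hA.mod_mem_linearAbove hφ (mul_mem_linearAbove hE hE)

namespace NewtonApprox

lemma mul_mod_mem (hφ : IsAffineFrom φ lam d) (h : NewtonApprox w φ lam d P A V s) :
    V * (P % A) ∈ coeffsAbove w φ s := by
  simpa using mul_mem_coeffsAbove hφ.le_add h.inv_mem h.mod_mem

lemma correction_mem (hφ : IsAffineFrom φ lam d) (h : NewtonApprox w φ lam d P A V s) :
    (V * P) % A ∈ coeffsAbove w φ s := by
  rw [← mul_mod_mod]
  exact h.distinguished.mod_mem hφ (h.mul_mod_mem hφ)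

lemma distinguished_add_correction (hφ : IsAffineFrom φ lam d) (hs : 0 ≤ s)
    (h : NewtonApprox w φ lam d P A V s) : IsDistinguished w φ d (A + (V * P) % A) :=
  h.distinguished.add (degree_mod_lt _ h.distinguished.ne_zero)
    (coeffsAbove_antitone hs (h.correction_mem hφ))

/-- With `R = P % A`, `E = (1 - V * (P / A)) % A` and `f = (1 - V * (P / A)) / A`, the witnesses are
`g = f R + (V R) / A * (P / A)` and `T = E R - g D`, where `D` is the correction. -/
lemma exists_factor_correction (hφ : IsAffineFrom φ lam d) (h : NewtonApprox w φ lam d P A V s) :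
    ∃ g ∈ linearAbove w lam s, ∃ T ∈ coeffsAbove w φ (2 * s),
      P = T + (A + (V * P) % A) * (P / A + g) := by
  have hA := h.distinguished
  set R := P % A
  set D := (V * P) % A
  set f := (1 - V * (P / A)) / A
  set E := (1 - V * (P / A)) % A
  set q := (V * R) / A
  have hfR : f * R ∈ linearAbove w lam s := by
    simpa using hA.div_mul_mem_linearAbove hφ (one_sub_mul_mem h.inv_mem h.div_mem) h.mod_mem
  have hqB : q * (P / A) ∈ linearAbove w lam s := by
    simpa using mul_mem_linearAbove (hA.div_mem hφ (h.mul_mod_mem hφ)) h.div_mem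
  have hg : f * R + q * (P / A) ∈ linearAbove w lam s := add_mem hfR hqB
  refine ⟨_, hg, E * R - (f * R + q * (P / A)) * D, ?_, ?_⟩
  · rw [two_mul]
    exact sub_mem (mul_mem_coeffsAbove hφ.le_add h.inv_defect_mem h.mod_mem)
      (mul_mem_coeffsAbove hφ.le_add hg (h.correction_mem hφ))
  · have hP : A * (P / A) + R = P := EuclideanDomain.div_add_mod P A
    have hE : A * f + E = 1 - V * (P / A) := EuclideanDomain.div_add_mod _ A
    have hD : A * q + D = V * R := by
      rw [← EuclideanDomain.div_add_mod (V * R) A, mul_mod_mod]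
    linear_combination -hP - R * hE - P / A * hD

lemma mod_add_correction_mem (hφ : IsAffineFrom φ lam d) (hs : 0 ≤ s)
    (h : NewtonApprox w φ lam d P A V s) :
    P % (A + (V * P) % A) ∈ coeffsAbove w φ (2 * s) := by
  obtain ⟨g, -, T, hT, hP⟩ := h.exists_factor_correction hφ
  have hmod : P % (A + (V * P) % A) = T % (A + (V * P) % A) :=
    mod_eq_of_dvd_sub ⟨P / A + g, by linear_combination hP⟩
  exact hmod ▸ (h.distinguished_add_correction hφ hs).mod_mem hφ hT

lemma div_add_correction_sub_div_mem (hφ : IsAffineFrom φ lam d) (hs : 0 ≤ s)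
    (h : NewtonApprox w φ lam d P A V s) :
    P / (A + (V * P) % A) - P / A ∈ linearAbove w lam s := by
  have hA' := h.distinguished_add_correction hφ hs
  obtain ⟨g, hg, T, hT, hP⟩ := h.exists_factor_correction hφ
  set A' := A + (V * P) % A
  have hdiv : P / A' - P / A = T / A' + g := by
    have hP' : P / A' = T / A' + (P / A + g) := by
      conv_lhs => rw [hP]
      rw [add_mul_div hA'.ne_zero]
    rw [hP']; ring
  rw [hdiv]
  exact add_mem (coeffsAbove_antitone (by linarith) (hA'.div_mem hφ hT)) hg

lemma inv_defect_add_correction_mem (hφ : IsAffineFrom φ lam d) (hs : 0 ≤ s)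
    (h : NewtonApprox w φ lam d P A V s) :
    (1 - V * (P / (A + (V * P) % A))) % (A + (V * P) % A) ∈ linearAbove w lam s := by
  have hA' := h.distinguished_add_correction hφ hs
  have hΔ := h.div_add_correction_sub_div_mem hφ hs
  set D := (V * P) % A
  set f := (1 - V * (P / A)) / A
  set E := (1 - V * (P / A)) % A
  have hfD : f * D ∈ linearAbove w lam s := by
    simpa using h.distinguished.div_mul_mem_linearAbove hφ
      (one_sub_mul_mem h.inv_mem h.div_mem) (h.correction_mem hφ)
  have hVΔ : V * (P / (A + D) - P / A) ∈ linearAbove w lam s := by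
    simpa using mul_mem_linearAbove h.inv_mem hΔ
  have hmod : (1 - V * (P / (A + D))) % (A + D)
      = (E - f * D - V * (P / (A + D) - P / A)) % (A + D) := by
    have hE : A * f + E = 1 - V * (P / A) := EuclideanDomain.div_add_mod _ A
    exact mod_eq_of_dvd_sub ⟨f, by linear_combination -hE⟩
  rw [hmod]
  exact hA'.mod_mem_linearAbove hφ (sub_mem (sub_mem h.inv_defect_mem hfD) hVΔ)

theorem step (hφ : IsAffineFrom φ lam d) (hs : 0 ≤ s) (h : NewtonApprox w φ lam d P A V s) :
    NewtonApprox w φ lam d P (A + (V * P) % A)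
      ((2 * V - V ^ 2 * (P / (A + (V * P) % A))) % (A + (V * P) % A)) (2 * s) := by
  have hA' := h.distinguished_add_correction hφ hs
  have hB' : P / (A + (V * P) % A) ∈ linearAbove w lam 0 := by
    rw [← sub_add_cancel (P / (A + (V * P) % A)) (P / A)]
    exact add_mem (coeffsAbove_antitone hs (h.div_add_correction_sub_div_mem hφ hs)) h.div_mem
  exact
    { distinguished := hA'
      inv_mem := hA'.newton_inv_mem hφ h.inv_mem hB'
      div_mem := hB'
      mod_mem := h.mod_add_correction_mem hφ hs
      inv_defect_mem := hA'.newton_inv_defect_mem hφ (h.inv_defect_add_correction_mem hφ hs) }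

end NewtonApprox

/-- The Newton recursion for the slope factorization of `P`: `A i` are the approximate divisors,
`V i` the approximate inverses of the cofactors. -/
structure IsNewtonIteration (P : K[X]) (A V : ℕ → K[X]) : Prop where
  divisor_succ : ∀ i, A (i + 1) = A i + (V i * P) % A i
  inv_succ : ∀ i, V (i + 1) = (2 * V i - V i ^ 2 * (P / A (i + 1))) % A (i + 1)

lemma IsNewtonIteration.newtonApprox {A V : ℕ → K[X]} (hφ : IsAffineFrom φ lam d) (hs : 0 ≤ s)
    (hAV : IsNewtonIteration P A V) (h0 : NewtonApprox w φ lam d P (A 0) (V 0) s) (i : ℕ) :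
    NewtonApprox w φ lam d P (A i) (V i) (2 ^ i * s) := by
  induction i with
  | zero => simpa using h0
  | succ i ih =>
    have hstep := ih.step hφ (by positivity)
    rwa [← hAV.divisor_succ, ← hAV.inv_succ, ← mul_assoc, ← pow_succ'] at hstep

lemma IsNewtonIteration.succ_sub_mem {A V : ℕ → K[X]} (hφ : IsAffineFrom φ lam d) (hs : 0 ≤ s)
    (hAV : IsNewtonIteration P A V) (h0 : NewtonApprox w φ lam d P (A 0) (V 0) s) (i : ℕ) :
    A (i + 1) - A i ∈ coeffsAbove w φ (2 ^ i * s) := by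
  rw [hAV.divisor_succ, add_sub_cancel_left]
  exact (hAV.newtonApprox hφ hs h0 i).correction_mem hφ

end NewtonIteration

section Limit

variable {w : AddValuation K (WithTop ℝ)} {φ : ℕ → ℝ} {A : ℕ → K[X]} {L : K[X]}

/-- Coefficientwise convergence of a sequence of polynomials for the topology defined by `w`. -/
def ConvergesCoeffwise (w : AddValuation K (WithTop ℝ)) (A : ℕ → K[X]) (L : K[X]) : Prop :=
  ∀ (j : ℕ) (M : ℝ), ∃ N, ∀ i ≥ N, (M : WithTop ℝ) ≤ w ((A i - L).coeff j)

lemma sub_mem_of_forall_succ_sub_mem {G : Type*} [AddCommGroup G] {H : ℕ → AddSubgroup G}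
    (hH : Antitone H) {a : ℕ → G} (h : ∀ i, a (i + 1) - a i ∈ H i) (i k : ℕ) :
    a (i + k) - a i ∈ H i := by
  induction k with
  | zero => simp
  | succ k ih =>
    rw [← sub_add_sub_cancel _ (a (i + k))]
    exact add_mem (hH (Nat.le_add_right i k) (h (i + k))) ih

lemma ConvergesCoeffwise.sub_mem (hL : ConvergesCoeffwise w A L) {i : ℕ} {t : ℝ}
    (h : ∀ k, A (i + k) - A i ∈ coeffsAbove w φ t) : L - A i ∈ coeffsAbove w φ t := by
  intro j
  obtain ⟨N, hN⟩ := hL j (φ j + t)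
  rw [← sub_sub_sub_cancel_left _ _ (A (i + N)), coeff_sub]
  exact w.map_le_sub (h N j) (hN (i + N) (Nat.le_add_left N i))

end Limit

section Vertex

variable {w : AddValuation K (WithTop ℝ)} {P : K[X]} {d : ℕ} {c lam0 lam1 a b : ℝ}

/-- `(d, c)` is a point of the Newton polygon of `P` carried by the coefficient of index `d`, with
supporting lines of slopes `lam0` and `lam1`. For `lam0 < lam1` this says that it is a vertex. -/
structure IsVertex (w : AddValuation K (WithTop ℝ)) (P : K[X]) (d : ℕ) (c lam0 lam1 : ℝ) :
    Prop where
  val_coeff : w (P.coeff d) = c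
  left_mem : P ∈ linearAbove w lam0 (c - lam0 * d)
  right_mem : P ∈ linearAbove w lam1 (c - lam1 * d)

lemma IsVertex.minorant_le (hP : IsVertex w P d c lam0 lam1) (hab : P ∈ linearAbove w a b) :
    a * d + b ≤ c := by
  have h := hab d
  rwa [hP.val_coeff, WithTop.coe_le_coe] at h

/-- The line `a j + b` up to its intersection with the line of slope `lam` through `(d, c)`, and the
latter from there on. -/
def brokenLine (a b lam c : ℝ) (d j : ℕ) : ℝ :=
  max (a * j + b) (lam * j + (c - lam * d))

variable {lam : ℝ}

lemma brokenLine_of_le (ha : a ≤ lam) (hb : a * d + b ≤ c) {j : ℕ} (hj : d ≤ j) :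
    brokenLine a b lam c d j = lam * j + (c - lam * d) := by
  have hj' : (d : ℝ) ≤ j := by exact_mod_cast hj
  refine max_eq_right ?_
  nlinarith

lemma brokenLine_self (ha : a ≤ lam) (hb : a * d + b ≤ c) : brokenLine a b lam c d d = c := by
  rw [brokenLine_of_le ha hb le_rfl]
  ring

lemma isAffineFrom_brokenLine (ha : a ≤ lam) (hb : a * d + b ≤ c) :
    IsAffineFrom (brokenLine a b lam c d) lam d where
  le_add j k := by
    have hline : a * j + b ≤ brokenLine a b lam c d j := le_max_left _ _
    have hray : lam * j + (c - lam * d) ≤ brokenLine a b lam c d j := le_max_right _ _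
    have hak : a * k ≤ lam * k := by gcongr
    rw [brokenLine]
    push_cast
    exact max_le (by linarith) (by linarith)
  add_eq k := by
    rw [brokenLine_of_le ha hb (Nat.le_add_right d k), brokenLine_self ha hb]
    push_cast
    ring

lemma mem_coeffsAbove_brokenLine (hline : P ∈ linearAbove w a b)
    (hray : P ∈ linearAbove w lam (c - lam * d)) :
    P ∈ coeffsAbove w (brokenLine a b lam c d) 0 := by
  intro j
  rw [add_zero, brokenLine]
  exact max_rec' (fun r : ℝ => (r : WithTop ℝ) ≤ w (P.coeff j)) (hline j) (hray j)

lemma coeff_sum_range_C_mul_X_pow (P : K[X]) (m j : ℕ) :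
    (∑ i ∈ Finset.range m, C (P.coeff i) * X ^ i).coeff j = if j < m then P.coeff j else 0 := by
  simp [coeff_X_pow, finsetSum_coeff]

lemma isDistinguished_sum_range {φ : ℕ → ℝ} (hd : w (P.coeff d) = φ d)
    (hP : P ∈ coeffsAbove w φ 0) :
    IsDistinguished w φ d (∑ i ∈ Finset.range (d + 1), C (P.coeff i) * X ^ i) where
  natDegree_le := by
    rw [natDegree_le_iff_coeff_eq_zero]
    intro j hj
    rw [coeff_sum_range_C_mul_X_pow, if_neg (by lia)]
  val_coeff := by rw [coeff_sum_range_C_mul_X_pow, if_pos d.lt_succ_self, hd]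
  mem j := by
    rw [coeff_sum_range_C_mul_X_pow]
    split_ifs
    · exact hP j
    · simp

lemma IsVertex.sub_sum_range_mem (hP : IsVertex w P d c lam0 lam1) (hlam : lam0 ≤ lam1)
    (hab : P ∈ linearAbove w a b) (ha : a ≤ lam0) :
    P - ∑ i ∈ Finset.range (d + 1), C (P.coeff i) * X ^ i
      ∈ coeffsAbove w (brokenLine a b lam0 c d) (lam1 - lam0) := by
  intro j
  rw [coeff_sub, coeff_sum_range_C_mul_X_pow]
  split_ifs with hj
  · simp
  · have hj' : (d : ℝ) + 1 ≤ j := by exact_mod_cast not_lt.1 hj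
    rw [sub_zero, brokenLine_of_le ha (hP.minorant_le hab) (by lia)]
    refine le_trans (WithTop.coe_le_coe.2 ?_) (hP.right_mem j)
    nlinarith

theorem IsVertex.limit_sub_mem_linearAbove (hP : IsVertex w P d c lam0 lam1) (hlam : lam0 ≤ lam1)
    {A V : ℕ → K[X]} {L : K[X]} (hAV : IsNewtonIteration P A V)
    (hA0 : A 0 = ∑ i ∈ Finset.range (d + 1), C (P.coeff i) * X ^ i) (hV0 : V 0 = 1)
    (hL : ConvergesCoeffwise w A L) (hab : P ∈ linearAbove w a b) (ha : a ≤ lam0) (i : ℕ) :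
    L - A i ∈ linearAbove w a (b + 2 ^ i * (lam1 - lam0)) := by
  have hκ : 0 ≤ lam1 - lam0 := sub_nonneg.2 hlam
  have hb := hP.minorant_le hab
  have hφ := isAffineFrom_brokenLine ha hb
  have hφd : brokenLine a b lam0 c d d = c := brokenLine_self ha hb
  set φ := brokenLine a b lam0 c d
  have hd : w (P.coeff d) = φ d := by rw [hP.val_coeff, hφd]
  have h0 : NewtonApprox w φ lam0 d P (A 0) (V 0) (lam1 - lam0) := by
    rw [hA0, hV0]
    exact newtonApprox_one hφ hκ
      (isDistinguished_sum_range hd (mem_coeffsAbove_brokenLine hab hP.left_mem))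
      (hP.sub_sum_range_mem hlam hab ha)
  have hmono : Antitone fun i : ℕ => coeffsAbove w φ (2 ^ i * (lam1 - lam0)) :=
    fun i j hij => coeffsAbove_antitone (by gcongr; norm_num)
  have hmem : L - A i ∈ coeffsAbove w φ (2 ^ i * (lam1 - lam0)) :=
    hL.sub_mem (sub_mem_of_forall_succ_sub_mem hmono (hAV.succ_sub_mem hφ hκ h0) i)
  refine coeffsAbove_le_of_le (fun j => ?_) hmem
  have hline : a * j + b ≤ φ j := le_max_left _ _
  linarith

lemma IsVertex.exists_minorant_slope_le (hP : IsVertex w P d c lam0 lam1)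
    (hab : P ∈ linearAbove w a b) {x : ℝ} (hx : x ≤ d) :
    ∃ a' b', P ∈ linearAbove w a' b' ∧ a' ≤ lam0 ∧ a * x + b ≤ a' * x + b' := by
  rcases le_total a lam0 with ha | ha
  · exact ⟨a, b, hab, ha, le_rfl⟩
  · refine ⟨lam0, c - lam0 * d, hP.left_mem, le_rfl, ?_⟩
    nlinarith [hP.minorant_le hab]

end Vertex

section NewtonFunction

/-- The valuation `v` with its integer values regarded as real numbers. -/
def realVal (v : AddValuation K (WithTop ℤ)) : AddValuation K (WithTop ℝ) :=
  v.map (Int.castAddHom ℝ).withTopMap rfl Int.cast_mono.withTop_map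

lemma coe_le_toE_iff (r : ℝ) (z : WithTop ℤ) :
    (r : EReal) ≤ toE z ↔ (r : WithTop ℝ) ≤ z.map (Int.cast : ℤ → ℝ) := by
  cases z with
  | top => exact iff_of_true le_top le_top
  | coe n => exact EReal.coe_le_coe_iff.trans WithTop.coe_le_coe.symm

lemma ConvergesCoeffwise.of_int {v : AddValuation K (WithTop ℤ)} {A : ℕ → K[X]} {L : K[X]}
    (h : ∀ j : ℕ, ∀ M : ℤ, ∃ N : ℕ, ∀ i ≥ N, (M : WithTop ℤ) ≤ v ((A i - L).coeff j)) :
    ConvergesCoeffwise (realVal v) A L := by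
  intro j r
  obtain ⟨M, hM⟩ := exists_int_ge r
  obtain ⟨N, hN⟩ := h j M
  refine ⟨N, fun i hi => (WithTop.coe_le_coe.2 hM).trans ?_⟩
  exact (Int.cast_mono (R := ℝ)).withTop_map (hN i hi)

variable {v : AddValuation K (WithTop ℤ)} {P : K[X]} {a b x y : ℝ}

lemma mem_linearAbove_realVal_iff :
    P ∈ linearAbove (realVal v) a b ↔
      ∀ i : ℕ, i ≤ P.natDegree → ((a * (i : ℝ) + b : ℝ) : EReal) ≤ toE (v (P.coeff i)) := by
  simp only [coe_le_toE_iff]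
  refine ⟨fun h i _ => h i, fun h j => ?_⟩
  rcases le_or_gt j P.natDegree with hj | hj
  · exact h j hj
  · simp [coeff_eq_zero_of_natDegree_lt hj]

lemma le_NF (hab : P ∈ linearAbove (realVal v) a b) (x : ℝ) :
    ((a * x + b : ℝ) : EReal) ≤ NF v P x :=
  le_sSup ⟨a, b, mem_linearAbove_realVal_iff.1 hab, rfl⟩

lemma NF_le_iff {e : EReal} :
    NF v P x ≤ e ↔ ∀ a b, P ∈ linearAbove (realVal v) a b → ((a * x + b : ℝ) : EReal) ≤ e := by
  refine ⟨fun h a b hab => (le_NF hab x).trans h, fun h => sSup_le ?_⟩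
  rintro _ ⟨a, b, hab, rfl⟩
  exact h a b (mem_linearAbove_realVal_iff.2 hab)

lemma NF_le_coe_iff :
    NF v P x ≤ y ↔ ∀ a b, P ∈ linearAbove (realVal v) a b → a * x + b ≤ y := by
  simp only [NF_le_iff, EReal.coe_le_coe_iff]

lemma NF_add_coe_le {r : ℝ} {e : EReal}
    (h : ∀ a b, P ∈ linearAbove (realVal v) a b → ((a * x + b + r : ℝ) : EReal) ≤ e) :
    NF v P x + r ≤ e := by
  have hr : (r : EReal) ≠ ⊥ ∧ (r : EReal) ≠ ⊤ := ⟨EReal.coe_ne_bot r, EReal.coe_ne_top r⟩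
  rw [← EReal.le_sub_iff_add_le (.inl hr.1) (.inl hr.2), NF_le_iff]
  intro a b hab
  rw [EReal.le_sub_iff_add_le (.inl hr.1) (.inl hr.2)]
  exact_mod_cast h a b hab

lemma NF_convex {x₀ x₁ y₀ y₁ μ : ℝ} (h₀ : NF v P x₀ ≤ y₀) (h₁ : NF v P x₁ ≤ y₁)
    (hμ₀ : 0 ≤ μ) (hμ₁ : μ ≤ 1) :
    NF v P ((1 - μ) * x₀ + μ * x₁) ≤ ((1 - μ) * y₀ + μ * y₁ : ℝ) := by
  rw [NF_le_coe_iff] at *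
  intro a b hab
  calc a * ((1 - μ) * x₀ + μ * x₁) + b = (1 - μ) * (a * x₀ + b) + μ * (a * x₁ + b) := by ring
    _ ≤ (1 - μ) * y₀ + μ * y₁ :=
      add_le_add (mul_le_mul_of_nonneg_left (h₀ a b hab) (sub_nonneg.2 hμ₁))
        (mul_le_mul_of_nonneg_left (h₁ a b hab) hμ₀)

lemma le_realVal_coeff_of_forall_NF_le {j : ℕ} (h : ∀ r : ℝ, NF v P j ≤ r → y ≤ r) :
    (y : WithTop ℝ) ≤ realVal v (P.coeff j) := by
  cases hr : realVal v (P.coeff j) with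
  | top => exact le_top
  | coe r =>
    refine WithTop.coe_le_coe.2 (h r (NF_le_coe_iff.2 fun a b hab => ?_))
    exact WithTop.coe_le_coe.1 (hr ▸ hab j)

/-- Convexity, read backwards: beyond `x` the coefficients lie above the secant of the Newton
polygon through `x₀` and `x`. -/
lemma secant_le_realVal_coeff {x₀ y₀ ρ : ℝ} {j : ℕ} (h₀ : NF v P x₀ ≤ y₀) (h : y ≤ NF v P x)
    (hρ : 1 ≤ ρ) (hj : (j : ℝ) = x₀ + ρ * (x - x₀)) :
    ((y₀ + ρ * (y - y₀) : ℝ) : WithTop ℝ) ≤ realVal v (P.coeff j) := by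
  have hρ₀ : 0 < ρ := zero_lt_one.trans_le hρ
  refine le_realVal_coeff_of_forall_NF_le fun r hr => ?_
  have hx : x = (1 - ρ⁻¹) * x₀ + ρ⁻¹ * j := by rw [hj]; field_simp; ring
  have hy : y ≤ (1 - ρ⁻¹) * y₀ + ρ⁻¹ * r := by
    rw [← EReal.coe_le_coe_iff]
    refine h.trans ?_
    rw [hx]
    exact NF_convex h₀ hr (inv_nonneg.2 hρ₀.le) (inv_le_one_of_one_le₀ hρ)
  calc y₀ + ρ * (y - y₀) ≤ y₀ + ρ * ((1 - ρ⁻¹) * y₀ + ρ⁻¹ * r - y₀) := by gcongr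
    _ = r := by field_simp; ring

variable {d : ℕ} {c lam lam0 lam1 : ℝ}

lemma line_add_gap_le_realVal_coeff (hd : NF v P d = c)
    (hleft : NF v P ((d : ℝ) - 1) = ((c - lam0 : ℝ) : EReal))
    (hright : NF v P ((d : ℝ) + 1) = ((c + lam1 : ℝ) : EReal))
    (hlam : lam ∈ Set.Icc lam0 lam1) {j : ℕ} (hj : j ≠ d) :
    ((lam * j + (c - lam * d) + min (lam - lam0) (lam1 - lam) : ℝ) : WithTop ℝ)
      ≤ realVal v (P.coeff j) := by
  rcases lt_or_gt_of_ne hj with hj | hj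
  · have hj' : (j : ℝ) + 1 ≤ d := by exact_mod_cast hj
    have hsec := secant_le_realVal_coeff hd.le hleft.ge (j := j) (ρ := d - j)
      (by linarith) (by ring)
    refine le_trans (WithTop.coe_le_coe.2 ?_) hsec
    nlinarith [min_le_left (lam - lam0) (lam1 - lam), hlam.1]
  · have hj' : (d : ℝ) + 1 ≤ j := by exact_mod_cast hj
    have hsec := secant_le_realVal_coeff hd.le hright.ge (j := j) (ρ := j - d)
      (by linarith) (by ring)
    refine le_trans (WithTop.coe_le_coe.2 ?_) hsec
    nlinarith [min_le_right (lam - lam0) (lam1 - lam), hlam.2]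

lemma mem_linearAbove_of_NF_eq (hd : NF v P d = c)
    (hleft : NF v P ((d : ℝ) - 1) = ((c - lam0 : ℝ) : EReal))
    (hright : NF v P ((d : ℝ) + 1) = ((c + lam1 : ℝ) : EReal))
    (hlam : lam ∈ Set.Icc lam0 lam1) {ε : ℝ} (hε : ε ≤ min (lam - lam0) (lam1 - lam))
    (hcoeff : ((c + ε : ℝ) : WithTop ℝ) ≤ realVal v (P.coeff d)) :
    P ∈ linearAbove (realVal v) lam (c - lam * d + ε) := by
  intro j
  rcases eq_or_ne j d with rfl | hj
  · exact le_of_eq_of_le (by congr 1; ring) hcoeff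
  · refine le_trans (WithTop.coe_le_coe.2 ?_)
      (line_add_gap_le_realVal_coeff hd hleft hright hlam hj)
    linarith

/-- If the coefficient of index `d` were above `(d, c)`, the line of slope `(lam0 + lam1) / 2`
through that point could be raised and still be a minorant. -/
lemma realVal_coeff_le_of_NF_eq (hlt : lam0 < lam1) (hd : NF v P d = c)
    (hleft : NF v P ((d : ℝ) - 1) = ((c - lam0 : ℝ) : EReal))
    (hright : NF v P ((d : ℝ) + 1) = ((c + lam1 : ℝ) : EReal)) :
    realVal v (P.coeff d) ≤ c := by
  by_contra! hgt
  obtain ⟨z, hcz, hz⟩ := WithTop.lt_iff_exists_coe_btwn.1 hgt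
  have hcz' : 0 < z - c := sub_pos.2 (WithTop.coe_lt_coe.1 hcz)
  set lam := (lam0 + lam1) / 2 with hlam
  set gap := min (lam - lam0) (lam1 - lam)
  have hgap : 0 < gap := lt_min (by linarith) (by linarith)
  have hraise : ((c + min gap (z - c) : ℝ) : WithTop ℝ) ≤ realVal v (P.coeff d) :=
    le_trans (WithTop.coe_le_coe.2 (by linarith [min_le_right gap (z - c)])) hz.le
  have hmem := mem_linearAbove_of_NF_eq hd hleft hright ⟨by linarith, by linarith⟩
    (min_le_left gap (z - c)) hraise
  have hle := NF_le_coe_iff.1 hd.le _ _ hmem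
  linarith [lt_min hgap hcz']

theorem isVertex_of_NF_eq (hlt : lam0 < lam1) (hd : NF v P d = c)
    (hleft : NF v P ((d : ℝ) - 1) = ((c - lam0 : ℝ) : EReal))
    (hright : NF v P ((d : ℝ) + 1) = ((c + lam1 : ℝ) : EReal)) :
    IsVertex (realVal v) P d c lam0 lam1 := by
  have hge : (c : WithTop ℝ) ≤ realVal v (P.coeff d) :=
    le_realVal_coeff_of_forall_NF_le fun r hr => EReal.coe_le_coe_iff.1 (hd ▸ hr)
  have hsupport : ∀ lam ∈ Set.Icc lam0 lam1,
      P ∈ linearAbove (realVal v) lam (c - lam * d) := fun lam hlam => by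
    have hgap : 0 ≤ min (lam - lam0) (lam1 - lam) :=
      le_min (sub_nonneg.2 hlam.1) (sub_nonneg.2 hlam.2)
    simpa using mem_linearAbove_of_NF_eq hd hleft hright hlam hgap (by rwa [add_zero])
  exact
    { val_coeff := (realVal_coeff_le_of_NF_eq hlt hd hleft hright).antisymm hge
      left_mem := hsupport lam0 ⟨le_rfl, hlt.le⟩
      right_mem := hsupport lam1 ⟨hlt.le, le_rfl⟩ }

end NewtonFunction

/-- quadratic rate of convergence of the Newton iteration:
`NF(A_∞ − A_i)(x) ≥ NF(P)(x) + 2ⁱκ` on `[0,d−1]`, `κ = NF(P)(d+1)+NF(P)(d−1)−2NF(P)(d)`. -/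
theorem stmt10 (v : AddValuation K (WithTop ℤ))
    (P : K[X]) (hP : P ≠ 0) (n d : ℕ) (hn : P.natDegree = n)
    (h0d : 0 < d) (hdn : d < n)
    (c lam0 lam1 : ℝ) (hlt : lam0 < lam1)
    (hd : NF v P (d : ℝ) = ((c : ℝ) : EReal))
    (hleft : NF v P ((d : ℝ) - 1) = ((c - lam0 : ℝ) : EReal))
    (hright : NF v P ((d : ℝ) + 1) = ((c + lam1 : ℝ) : EReal))
    (A V : ℕ → K[X])
    (hA0 : A 0 = ∑ i ∈ Finset.range (d + 1), C (P.coeff i) * X ^ i)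
    (hV0 : V 0 = 1)
    (hArec : ∀ i, A (i + 1) = A i + (V i * P) % A i)
    (hVrec : ∀ i, V (i + 1) = (2 * V i - (V i) ^ 2 * (P / A (i + 1))) % A (i + 1))
    (Ainf : K[X]) (hdvd : Ainf ∣ P) (hdeg : Ainf.natDegree = d)
    (hldcf : Ainf.coeff d = P.coeff d)
    (hNFinf : ∀ x ∈ Set.Icc (0 : ℝ) (d : ℝ), NF v Ainf x = NF v P x)
    (hlim : ∀ j : ℕ, ∀ M : ℤ, ∃ N : ℕ, ∀ i ≥ N, (M : WithTop ℤ) ≤ v ((A i - Ainf).coeff j)) :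
    ∀ i : ℕ, ∀ x ∈ Set.Icc (0 : ℝ) ((d : ℝ) - 1),
      NF v P x + (((2 : ℝ) ^ i * (lam1 - lam0) : ℝ) : EReal) ≤ NF v (Ainf - A i) x := by
  intro i x hx
  have hvertex : IsVertex (realVal v) P d c lam0 lam1 := isVertex_of_NF_eq hlt hd hleft hright
  have hiter : IsNewtonIteration P A V := ⟨hArec, hVrec⟩
  refine NF_add_coe_le fun a b hab => ?_
  obtain ⟨a', b', hab', ha', hle⟩ := hvertex.exists_minorant_slope_le hab
    (hx.2.trans (sub_le_self _ zero_le_one))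
  have hmem : Ainf - A i ∈ linearAbove (realVal v) a' (b' + 2 ^ i * (lam1 - lam0)) :=
    hvertex.limit_sub_mem_linearAbove hlt.le hiter hA0 hV0 (.of_int hlim) hab' ha' i
  refine le_trans ?_ (le_NF hmem x)
  rw [EReal.coe_le_coe_iff]
  linarith
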